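/- The Max rule R^m_{1_{|B_v|>0}} satisfies Merging Monotonicity: for every budgeting scenario E = (A, V, c, ℓ), every winning budget B of E under R^m_{1_{|B_v|>0}}, and every set A' ⊆ B such that each voter approves either all items of A' or none of them, in the scenario E' obtained from E by merging A' into a single new item a, some winning budget of E' under R^m_{1_{|B_v|>0}} contains a. -/

import Mathlib

/-!
If `A'` is nonempty, the budget `(B \ A') ∪ {x}` wins the merged scenario: it costs as much as `B`
and covers the same voters. A better budget `C` of the merged scenario could be turned into a
better budget of the original one by replacing `x` (if present) with the items of `A'`, at the
same cost and without losing any voter.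

If `A'` is empty, the all-or-nothing condition is vacuous, so any set of voters may approve `x` and
the budget built from `B` need not win. But then `x` is free, so adding `x` to an arbitrary winning
budget of the merged scenario gives a winning budget (`exists_winning`, `fCover_mono`).
-/

open Finset

/-- A budget `B` is feasible in scenario `(A, c, ℓ)` if it consists of available items
and its total cost is within the budget limit. -/
def feasible {ι : Type*} (A : Finset ι) (c : ι → ℕ) (ℓ : ℕ) (B : Finset ι) : Prop :=
  B ⊆ A ∧ ∑ a ∈ B, c a ≤ ℓ

/-- Total satisfaction of the voters `V` (with approval sets `appr`) from budget `B`,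
under satisfaction function `f`. -/
def totalSat {ι υ : Type*} (V : Finset υ) (appr : υ → Finset ι)
    (f : Finset ι → Finset ι → ℕ) (B : Finset ι) : ℕ :=
  ∑ v ∈ V, f (appr v) B

/-- `B` is a winning budget under the Max rule `R^m_f`. -/
def winning {ι υ : Type*} (A : Finset ι) (V : Finset υ) (appr : υ → Finset ι)
    (c : ι → ℕ) (ℓ : ℕ) (f : Finset ι → Finset ι → ℕ) (B : Finset ι) : Prop :=
  feasible A c ℓ B ∧
    ∀ B' : Finset ι, feasible A c ℓ B' → totalSat V appr f B' ≤ totalSat V appr f B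

/-- Cardinality satisfaction: `f(A_v, B) = |A_v ∩ B|`. -/
def fCard {ι : Type*} [DecidableEq ι] : Finset ι → Finset ι → ℕ :=
  fun Av B => (Av ∩ B).card

/-- Cost satisfaction: `f(A_v, B) = c(A_v ∩ B)`. -/
def fCost {ι : Type*} [DecidableEq ι] (c : ι → ℕ) : Finset ι → Finset ι → ℕ :=
  fun Av B => ∑ a ∈ Av ∩ B, c a

/-- Coverage satisfaction: `f(A_v, B) = 1` if `A_v ∩ B ≠ ∅`, else `0`. -/
def fCover {ι : Type*} [DecidableEq ι] : Finset ι → Finset ι → ℕ :=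
  fun Av B => if (Av ∩ B).Nonempty then 1 else 0

lemma fCover_mono {ι : Type*} [DecidableEq ι] (S : Finset ι) {B C : Finset ι} (h : B ⊆ C) :
    fCover S B ≤ fCover S C := by
  unfold fCover
  split_ifs with h1 h2
  · exact le_rfl
  · exact absurd (h1.mono (inter_subset_inter_left h)) h2
  · exact Nat.zero_le _
  · exact le_rfl

lemma fCover_le_of_imp {ι : Type*} [DecidableEq ι] {S T B C : Finset ι}
    (h : ∀ y ∈ S, y ∈ B → ∃ z ∈ T, z ∈ C) : fCover S B ≤ fCover T C := by
  unfold fCover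
  split_ifs with h1 h2
  · exact le_rfl
  · obtain ⟨y, hy⟩ := h1
    obtain ⟨z, hz, hz'⟩ := h y (mem_inter.1 hy).1 (mem_inter.1 hy).2
    exact absurd ⟨z, mem_inter.2 ⟨hz, hz'⟩⟩ h2
  · exact Nat.zero_le _
  · exact le_rfl

lemma exists_winning {ι υ : Type*} (A : Finset ι) (V : Finset υ) (appr : υ → Finset ι)
    (c : ι → ℕ) (ℓ : ℕ) (f : Finset ι → Finset ι → ℕ) : ∃ B, winning A V appr c ℓ f B := by
  classical
  obtain ⟨B, hB, hmax⟩ := exists_max_image (A.powerset.filter fun B => ∑ a ∈ B, c a ≤ ℓ)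
    (totalSat V appr f) ⟨∅, by simp⟩
  simp only [mem_filter, mem_powerset] at hB hmax
  exact ⟨B, hB, hmax⟩

/-- `R^m_{1_{|B_v|>0}}` satisfies Merging Monotonicity: if `A'` is a subset of a
winning budget such that each voter approves all of `A'` or none of it, and `A'` is
merged into a single fresh item `x` (of cost `c(A')`, approved exactly by the voters
who approved all of `A'`), then some winning budget of the merged scenario contains `x`. -/
theorem cover_maxRule_mergingMonotone
    {ι υ : Type*} [DecidableEq ι]
    (A : Finset ι) (V : Finset υ) (appr : υ → Finset ι) (c : ι → ℕ) (ℓ : ℕ)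
    (happr : ∀ v ∈ V, appr v ⊆ A)
    (B : Finset ι) (hwin : winning A V appr c ℓ fCover B)
    (A' : Finset ι) (hA'B : A' ⊆ B)
    (x : ι) (hx : x ∉ A)
    (c' : ι → ℕ) (hc'old : ∀ y ∈ A \ A', c' y = c y) (hc'x : c' x = ∑ y ∈ A', c y)
    (appr' : υ → Finset ι)
    (happr' : ∀ v,
      (A' ⊆ appr v ∧ appr' v = (appr v \ A') ∪ {x}) ∨
      (Disjoint (appr v) A' ∧ appr' v = appr v)) :
    ∃ B' : Finset ι,
      winning ((A \ A') ∪ {x}) V appr' c' ℓ fCover B' ∧ x ∈ B' := by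
  obtain ⟨⟨hBA, hBc⟩, hBmax⟩ := hwin
  have hA'A : A' ⊆ A := hA'B.trans hBA
  rcases A'.eq_empty_or_nonempty with rfl | ⟨w, hw⟩
  · obtain ⟨W, ⟨hWA, hWc⟩, hWmax⟩ := exists_winning ((A \ ∅) ∪ {x}) V appr' c' ℓ fCover
    refine ⟨insert x W, ⟨⟨?_, ?_⟩, fun C hC => (hWmax C hC).trans ?_⟩, mem_insert_self _ _⟩
    · exact insert_subset (by simp) hWA
    · rwa [sum_insert_of_eq_zero_if_notMem fun _ => by simpa using hc'x]
    · exact sum_le_sum fun v _ => fCover_mono _ (subset_insert _ _)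
  · -- Costs of sets of unmerged items agree in the two scenarios.
    have hcost : ∀ S ⊆ A \ A', ∑ y ∈ S, c' y = ∑ y ∈ S, c y := fun S hS =>
      sum_congr rfl fun y hy => hc'old y (hS hy)
    refine ⟨insert x (B \ A'), ⟨⟨?_, ?_⟩, fun C hC => ?_⟩, mem_insert_self _ _⟩
    · intro y hy
      grind
    · rw [sum_insert (by grind), hcost _ (sdiff_subset_sdiff hBA subset_rfl), hc'x, add_comm,
        sum_sdiff hA'B]
      exact hBc
    · obtain ⟨hCA, hCc⟩ := hC
      have hCx : C.erase x ⊆ A \ A' := by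
        intro y hy
        grind
      -- `D` is `C` with `x`, if present, replaced by the items of `A'`.
      obtain ⟨D, hD, hCD, hxD⟩ : ∃ D, feasible A c ℓ D ∧ C.erase x ⊆ D ∧ (x ∈ C → A' ⊆ D) := by
        by_cases hxC : x ∈ C
        · refine ⟨C.erase x ∪ A', ⟨?_, ?_⟩, subset_union_left, fun _ => subset_union_right⟩
          · exact union_subset (hCx.trans sdiff_subset) hA'A
          · rw [sum_union (disjoint_of_subset_left hCx sdiff_disjoint), ← hcost _ hCx, ← hc'x,
              sum_erase_add _ _ hxC]
            exact hCc
        · refine ⟨C.erase x, ⟨hCx.trans sdiff_subset, ?_⟩, subset_rfl, fun h => absurd h hxC⟩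
          rw [← hcost _ hCx, erase_eq_of_notMem hxC]
          exact hCc
      calc totalSat V appr' fCover C ≤ totalSat V appr fCover D := by
            refine sum_le_sum fun v hv => fCover_le_of_imp fun y hy hyC => ?_
            by_cases hyx : y = x
            · subst hyx
              rcases happr' v with ⟨h, -⟩ | ⟨-, h⟩
              · exact ⟨w, h hw, hxD hyC hw⟩
              · exact absurd (happr v hv (h ▸ hy)) hx
            · refine ⟨y, ?_, hCD (mem_erase.2 ⟨hyx, hyC⟩)⟩
              rcases happr' v with ⟨-, h⟩ | ⟨-, h⟩ <;> grind
        _ ≤ totalSat V appr fCover B := hBmax D hD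
        _ ≤ totalSat V appr' fCover (insert x (B \ A')) := by
            refine sum_le_sum fun v hv => fCover_le_of_imp fun y hy hyB => ?_
            rcases happr' v with ⟨-, h⟩ | ⟨hdis, h⟩
            · exact ⟨x, by simp [h], mem_insert_self _ _⟩
            · exact ⟨y, h ▸ hy,
                mem_insert_of_mem (mem_sdiff.2 ⟨hyB, disjoint_left.1 hdis hy⟩)⟩
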